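/- Let (X,T) be a TDS and Φ a subadditive potential. Then β(Φ) = sup over T-invariant Borel probability measures μ of χ(μ,Φ), where χ(μ,Φ) = lim (1/n)∫ log φₙ dμ and β(Φ) = lim (1/n) log sup_x φₙ(x). -/

import Mathlib

open MeasureTheory Filter Topology Set
open scoped ENNReal NNReal

/-- Positive part of an extended real, as an extended nonnegative real. -/
noncomputable def EReal.posPart (a : EReal) : ℝ≥0∞ :=
  if a = ⊤ then ⊤ else ENNReal.ofReal a.toReal

/-- `EReal`-valued logarithm of a real number: `elog r = -∞` for `r ≤ 0`. -/
noncomputable def elog (r : ℝ) : EReal := ENNReal.log (ENNReal.ofReal r)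

/-- The integral of an `EReal`-valued function, with values in `[-∞, ∞]`. -/
noncomputable def eint {X : Type*} [MeasurableSpace X] (μ : Measure X) (f : X → EReal) : EReal :=
  ((∫⁻ x, (f x).posPart ∂μ : ℝ≥0∞) : EReal) - ((∫⁻ x, (-f x).posPart ∂μ : ℝ≥0∞) : EReal)

/-- `Φ = {log φₙ}` is a subadditive potential for `T`: each `φₙ` is continuous,
nonnegative, and `φ_{n+m}(x) ≤ φₙ(x) · φₘ(Tⁿ x)`. -/
def SubadditivePotential {X : Type*} [TopologicalSpace X] (T : X → X) (φ : ℕ → X → ℝ) : Prop :=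
  (∀ n, 1 ≤ n → Continuous (φ n)) ∧ (∀ n x, 1 ≤ n → 0 ≤ φ n x) ∧
    (∀ m n : ℕ, 1 ≤ m → 1 ≤ n → ∀ x, φ (n + m) x ≤ φ n x * φ m (T^[n] x))

lemma elog_of_pos {r : ℝ} (h : 0 < r) : elog r = (Real.log r : EReal) :=
  ENNReal.log_ofReal_of_pos h

lemma elog_of_nonpos {r : ℝ} (h : r ≤ 0) : elog r = ⊥ := by
  simp [elog, ENNReal.log_ofReal, h]

lemma elog_mono {r s : ℝ} (h : r ≤ s) : elog r ≤ elog s :=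
  ENNReal.log_monotone (ENNReal.ofReal_le_ofReal h)

lemma posPart_coe (a : ℝ) : (a : EReal).posPart = ENNReal.ofReal a := by
  simp [EReal.posPart]

lemma ereal_posPart_mono {a b : EReal} (h : a ≤ b) : a.posPart ≤ b.posPart := by
  induction b with
  | top => simp [EReal.posPart]
  | bot => rw [le_bot_iff.1 h]
  | coe b =>
    induction a with
    | top => exact absurd h (by simp)
    | bot => simp [EReal.posPart]
    | coe a =>
      rw [posPart_coe, posPart_coe]
      exact ENNReal.ofReal_le_ofReal (by exact_mod_cast h)

lemma posPart_sub_posPart_neg (c : EReal) :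
    ((c.posPart : ℝ≥0∞) : EReal) - (((-c).posPart : ℝ≥0∞) : EReal) = c := by
  induction c with
  | top => simp [EReal.posPart]
  | bot => simp [EReal.posPart]
  | coe c =>
    rw [← EReal.coe_neg, posPart_coe, posPart_coe, EReal.coe_ennreal_ofReal,
      EReal.coe_ennreal_ofReal, ← EReal.coe_sub]
    congr 1
    rcases le_total 0 c with h | h
    · simp [h]
    · simp [h]

lemma eint_le_of_le {X : Type*} [MeasurableSpace X] (μ : Measure X) [IsProbabilityMeasure μ]
    (f : X → EReal) (c : EReal) (h : ∀ x, f x ≤ c) : eint μ f ≤ c := by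
  have h1 : ∫⁻ x, (f x).posPart ∂μ ≤ c.posPart := by
    calc _ ≤ ∫⁻ x, c.posPart ∂μ := lintegral_mono fun x => ereal_posPart_mono (h x)
      _ = _ := by simp
  have h2 : (-c).posPart ≤ ∫⁻ x, (-f x).posPart ∂μ := by
    calc _ = ∫⁻ x, (-c).posPart ∂μ := by simp
      _ ≤ _ := lintegral_mono fun x => ereal_posPart_mono (EReal.neg_le_neg_iff.2 (h x))
  rw [← posPart_sub_posPart_neg c]
  exact EReal.sub_le_sub (by exact_mod_cast h1) (by exact_mod_cast h2)

/-- Subadditive comparison with Birkhoff sums. -/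
lemma subadd_birkhoff {X : Type*} (T : X → X) (L : ℕ → X → ℝ) (m : ℕ) (K : ℝ)
    (hK : ∀ i ≤ m, ∀ x, |L i x| ≤ K)
    (hL : ∀ n k x, L (n + k) x ≤ L n x + L k (T^[n] x)) (n : ℕ) (x : X) :
    m * L (n + m) x ≤ 3 * m * K + ∑ i ∈ Finset.range (n + m), L m (T^[i] x) := by
  have key : ∀ n x, ∑ j ∈ Finset.range m, L (n + m - j) (T^[j] x) ≤
      m * K + ∑ i ∈ Finset.range n, L m (T^[i] x) := by
    intro n
    induction n with
    | zero =>
      intro x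
      simp only [Finset.range_zero, Finset.sum_empty, add_zero, zero_add]
      calc _ ≤ ∑ j ∈ Finset.range m, K :=
            Finset.sum_le_sum fun j _ => (le_abs_self _).trans (hK _ (Nat.sub_le _ _) _)
        _ = _ := by simp
    | succ n ih =>
      intro x
      have h1 := Finset.sum_range_succ (fun j => L (n + 1 + m - j) (T^[j] x)) m
      have h2 := Finset.sum_range_succ' (fun j => L (n + 1 + m - j) (T^[j] x)) m
      have h3 := ih (T x)
      rw [Finset.sum_range_succ']
      have h4 : ∑ j ∈ Finset.range m, L (n + 1 + m - (j + 1)) (T^[j + 1] x)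
          = ∑ j ∈ Finset.range m, L (n + m - j) (T^[j] (T x)) := by
        refine Finset.sum_congr rfl fun j _ => ?_
        rw [Function.iterate_succ_apply]
        congr 1
        omega
      have h5 := hL m (n + 1) x
      rw [show m + (n + 1) = n + 1 + m by omega] at h5
      simp only [Function.iterate_succ_apply, Function.iterate_zero, id] at h1 h2 h3 h4 h5 ⊢
      rw [show n + 1 + m - m = n + 1 by omega] at h1
      rw [show n + 1 + m - 0 = n + 1 + m by omega] at h2
      linarith
  have h1 : (m : ℝ) * L (n + m) x ≤ m * K + ∑ j ∈ Finset.range m, L (n + m - j) (T^[j] x) := by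
    have : ∀ j ∈ Finset.range m, L (n + m) x ≤ K + L (n + m - j) (T^[j] x) := by
      intro j hj
      have hj := Finset.mem_range.1 hj
      have := hL j (n + m - j) x
      rw [show j + (n + m - j) = n + m by omega] at this
      have h2 := (le_abs_self _).trans (hK j hj.le x)
      linarith
    have := Finset.sum_le_sum this
    simpa [Finset.sum_add_distrib] using this
  have h2 : -(m * K) ≤ ∑ i ∈ Finset.range m, L m (T^[n + i] x) := by
    have : ∀ i ∈ Finset.range m, -K ≤ L m (T^[n + i] x) := fun i _ =>
      (abs_le.1 (hK m le_rfl _)).1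
    have := Finset.sum_le_sum this
    simpa using this
  have h3 := key n x
  rw [Finset.sum_range_add]
  linarith

/-- Krylov-Bogolyubov along an ultrafilter. -/
lemma exists_invariant_limit {X : Type*} [MetricSpace X] [CompactSpace X]
    [MeasurableSpace X] [BorelSpace X] (T : X → X) (hT : Continuous T) (y : ℕ → X) :
    ∃ μ : ProbabilityMeasure X, Measure.map T (μ : Measure X) = (μ : Measure X) ∧
      ∀ f : X → ℝ, Continuous f →
        Tendsto (fun n : ℕ => (∑ i ∈ Finset.range n, f (T^[i] (y n))) / n)
          (hyperfilter ℕ : Filter ℕ) (𝓝 (∫ x, f x ∂(μ : Measure X))) := by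
  let ν : ℕ → Measure X := fun n =>
    ((n + 1 : ℕ) : ℝ≥0∞)⁻¹ • ∑ i ∈ Finset.range (n + 1), Measure.dirac (T^[i] (y (n + 1)))
  have hν : ∀ n, IsProbabilityMeasure (ν n) := by
    intro n
    constructor
    simp only [ν, Measure.smul_apply, Measure.finsetSum_apply, measure_univ, Finset.sum_const,
      Finset.card_range, smul_eq_mul, nsmul_eq_mul, mul_one]
    exact ENNReal.inv_mul_cancel (by simp) (by simp)
  have hint : ∀ n (f : X → ℝ), Continuous f →
      ∫ x, f x ∂(ν n) = (∑ i ∈ Finset.range (n + 1), f (T^[i] (y (n + 1)))) / (n + 1 : ℕ) := by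
    intro n f hf
    simp only [ν]
    rw [integral_smul_measure, integral_finsetSum_measure]
    · simp only [integral_dirac]
      rw [ENNReal.toReal_inv, ENNReal.toReal_natCast, smul_eq_mul, div_eq_inv_mul]
    · intro i _
      exact integrable_dirac (by simp)
  let P : ℕ → ProbabilityMeasure X := fun n => ⟨ν (n - 1), hν _⟩
  obtain ⟨μ, -, hμ⟩ := isCompact_univ.ultrafilter_le_nhds ((hyperfilter ℕ).map P) (by simp)
  have hlim : ∀ f : X → ℝ, Continuous f →
        Tendsto (fun n : ℕ => (∑ i ∈ Finset.range n, f (T^[i] (y n))) / n)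
          (hyperfilter ℕ : Filter ℕ) (𝓝 (∫ x, f x ∂(μ : Measure X))) := by
    intro f hf
    have h1 : Tendsto P (hyperfilter ℕ : Filter ℕ) (𝓝 μ) := hμ
    have h2 := ProbabilityMeasure.tendsto_iff_forall_integral_tendsto.1 h1
      (BoundedContinuousFunction.mkOfCompact ⟨f, hf⟩)
    refine h2.congr' ?_
    have h3 : ∀ᶠ n in (hyperfilter ℕ : Filter ℕ), 1 ≤ n :=
      Nat.hyperfilter_le_atTop (eventually_ge_atTop 1)
    filter_upwards [h3] with n hn
    obtain ⟨k, rfl⟩ := Nat.exists_eq_add_of_le' hn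
    simpa [P] using hint k f hf
  refine ⟨μ, ?_, hlim⟩
  have : IsProbabilityMeasure (Measure.map T (μ : Measure X)) :=
    Measure.isProbabilityMeasure_map hT.aemeasurable
  refine ext_of_forall_integral_eq_of_IsFiniteMeasure fun f => ?_
  rw [integral_map hT.aemeasurable f.continuous.aestronglyMeasurable]
  have h1 := (hlim (fun x => f (T x)) (f.continuous.comp hT)).sub (hlim f f.continuous)
  have h2 : Tendsto (fun n : ℕ => (f (T^[n] (y n)) - f (y n)) / (n : ℝ))
      (hyperfilter ℕ : Filter ℕ) (𝓝 0) := by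
    refine Tendsto.mono_left ?_ Nat.hyperfilter_le_atTop
    refine squeeze_zero_norm (a := fun n : ℕ => (2 * ‖f‖) / (n : ℝ)) (fun n => ?_)
      (tendsto_const_div_atTop_nhds_zero_nat _)
    rw [norm_div, Real.norm_natCast]
    gcongr
    calc _ ≤ ‖f (T^[n] (y n))‖ + ‖f (y n)‖ := norm_sub_le _ _
      _ ≤ 2 * ‖f‖ := by linarith [f.norm_coe_le_norm (T^[n] (y n)), f.norm_coe_le_norm (y n)]
  have h3 := tendsto_nhds_unique (h1.congr fun n => ?_) h2
  · linarith
  · rw [← sub_div, ← Finset.sum_sub_distrib]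
    congr 1
    have := Finset.sum_range_sub (fun i => f (T^[i] (y n))) n
    simpa [Function.iterate_succ_apply'] using this

/-- Truncated integrals converge to the extended integral of `log`. -/
lemma tendsto_trunc {X : Type*} [MetricSpace X] [CompactSpace X]
    [MeasurableSpace X] [BorelSpace X] (μ : Measure X) [IsProbabilityMeasure μ]
    (f : X → ℝ) (hf : Continuous f) (c : ℕ → ℝ) (hc : Antitone c) (hc0 : ∀ k, 0 < c k)
    (hc1 : ∀ k, c k ≤ 1) (hlim : Tendsto c atTop (𝓝 0)) :
    Tendsto (fun k : ℕ => ((∫ x, Real.log (max (f x) (c k)) ∂μ : ℝ) : EReal)) atTop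
      (𝓝 (eint μ (fun x => elog (f x)))) := by
  have hpos : ∀ k x, 0 < max (f x) (c k) := fun k x => lt_max_of_lt_right (hc0 k)
  have hcont : ∀ k, Continuous (fun x => Real.log (max (f x) (c k))) := fun k =>
    (hf.max continuous_const).log fun x => (hpos k x).ne'
  have hI : ∀ k, Integrable (fun x => Real.log (max (f x) (c k))) μ := fun k =>
    (hcont k).integrable_of_hasCompactSupport (HasCompactSupport.of_compactSpace _)
  have hP : ∀ k x, ENNReal.ofReal (Real.log (max (f x) (c k))) = (elog (f x)).posPart := by
    intro k x
    rcases le_or_gt (f x) 0 with h | h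
    · rw [elog_of_nonpos h, max_eq_right (h.trans (hc0 k).le)]
      simp [EReal.posPart, Real.log_nonpos (hc0 k).le (hc1 k)]
    · rw [elog_of_pos h, posPart_coe]
      rcases le_total (f x) (c k) with h' | h'
      · rw [max_eq_right h', ENNReal.ofReal_of_nonpos (Real.log_nonpos (hc0 k).le (hc1 k)),
          ENNReal.ofReal_of_nonpos (Real.log_nonpos h.le (h'.trans (hc1 k)))]
      · rw [max_eq_left h']
  have hN : Tendsto (fun k => ∫⁻ x, ENNReal.ofReal (-Real.log (max (f x) (c k))) ∂μ) atTop
      (𝓝 (∫⁻ x, (-elog (f x)).posPart ∂μ)) := by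
    refine lintegral_tendsto_of_tendsto_of_monotone
      (fun k => (hcont k).neg.measurable.ennreal_ofReal.aemeasurable)
      (ae_of_all _ fun x k l hkl => ?_) (ae_of_all _ fun x => ?_)
    · refine ENNReal.ofReal_le_ofReal (neg_le_neg (Real.log_le_log (hpos l x) ?_))
      exact max_le_max le_rfl (hc hkl)
    · rcases le_or_gt (f x) 0 with h | h
      · rw [elog_of_nonpos h]
        have h1 : (-(⊥ : EReal)).posPart = ⊤ := by simp [EReal.posPart]
        rw [h1]
        refine ENNReal.tendsto_ofReal_nhds_top.2 ?_
        have h2 : (fun k => -Real.log (max (f x) (c k))) = fun k => -Real.log (c k) := by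
          ext k
          rw [max_eq_right (h.trans (hc0 k).le)]
        rw [h2]
        refine tendsto_neg_atBot_atTop.comp (Real.tendsto_log_nhdsGT_zero.comp ?_)
        exact tendsto_nhdsWithin_iff.2 ⟨hlim, Eventually.of_forall hc0⟩
      · rw [elog_of_pos h, ← EReal.coe_neg, posPart_coe]
        refine tendsto_const_nhds.congr' ?_
        filter_upwards [hlim.eventually_le_const h] with k hk
        rw [max_eq_left hk]
  have hfin : ∫⁻ x, (elog (f x)).posPart ∂μ ≠ ⊤ := by
    simp_rw [← hP 0]
    exact (hI 0).lintegral_lt_top.ne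
  have heq : ∀ k, ((∫ x, Real.log (max (f x) (c k)) ∂μ : ℝ) : EReal) =
      ((∫⁻ x, (elog (f x)).posPart ∂μ : ℝ≥0∞) : EReal) +
      -((∫⁻ x, ENNReal.ofReal (-Real.log (max (f x) (c k))) ∂μ : ℝ≥0∞) : EReal) := by
    intro k
    rw [integral_eq_lintegral_pos_part_sub_lintegral_neg_part (hI k)]
    simp_rw [hP k]
    have hfin2 : ∫⁻ x, ENNReal.ofReal (-Real.log (max (f x) (c k))) ∂μ ≠ ⊤ :=
      (hI k).neg.lintegral_lt_top.ne
    rw [EReal.coe_sub, EReal.coe_ennreal_toReal hfin, EReal.coe_ennreal_toReal hfin2]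
    rfl
  simp_rw [heq]
  have hneg : Tendsto (fun k => -((∫⁻ x, ENNReal.ofReal (-Real.log (max (f x) (c k))) ∂μ : ℝ≥0∞)
      : EReal)) atTop (𝓝 (-((∫⁻ x, (-elog (f x)).posPart ∂μ : ℝ≥0∞) : EReal))) :=
    (continuous_neg.tendsto _).comp ((continuous_coe_ennreal_ereal.tendsto _).comp hN)
  have hadd := EReal.continuousAt_add
    (p := (((∫⁻ x, (elog (f x)).posPart ∂μ : ℝ≥0∞) : EReal),
      -((∫⁻ x, (-elog (f x)).posPart ∂μ : ℝ≥0∞) : EReal)))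
    (Or.inl (by simpa using hfin)) (Or.inl (by simp))
  exact hadd.tendsto.comp (tendsto_const_nhds.prodMk_nhds hneg)

/-- β(Φ) equals the supremum of the Lyapunov exponents χ(μ,Φ) over
all T-invariant Borel probability measures μ. -/
theorem maximal_lyapunov_exponent_eq_sup_over_invariant_measures
    {X : Type*} [MetricSpace X] [CompactSpace X] [Nonempty X]
    [MeasurableSpace X] [BorelSpace X]
    (T : X → X) (hT : Continuous T)
    (φ : ℕ → X → ℝ) (hφ : SubadditivePotential T φ)
    (β : EReal)
    (hβ : Tendsto (fun n : ℕ => elog (⨆ x, φ n x) / (n : EReal)) atTop (𝓝 β))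
    (χ : ProbabilityMeasure X → EReal)
    (hχ : ∀ μ : ProbabilityMeasure X, Measure.map T (μ : Measure X) = (μ : Measure X) →
      Tendsto (fun n : ℕ => eint (μ : Measure X) (fun x => elog (φ n x)) / (n : EReal))
        atTop (𝓝 (χ μ))) :
    β = sSup (χ '' {μ : ProbabilityMeasure X |
          Measure.map T (μ : Measure X) = (μ : Measure X)}) := by
  obtain ⟨hcont, hnn, hsub⟩ := hφ
  have hbdd : ∀ n, 1 ≤ n → BddAbove (Set.range (φ n)) := fun n hn =>
    (isCompact_range (hcont n hn)).bddAbove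
  apply le_antisymm
  · have hy : ∀ n, ∃ y, 1 ≤ n → φ n y = ⨆ x, φ n x := by
      intro n
      by_cases hn : 1 ≤ n
      · obtain ⟨y, hy⟩ := (isCompact_range (hcont n hn)).sSup_mem (range_nonempty _)
        exact ⟨y, fun _ => hy⟩
      · exact ⟨Classical.arbitrary X, fun h => absurd h hn⟩
    choose y hy using hy
    obtain ⟨μ, hμ, hlim⟩ := exists_invariant_limit T hT y
    refine le_trans ?_ (le_sSup ⟨μ, hμ, rfl⟩)
    refine ge_of_tendsto (hχ μ hμ) ?_
    filter_upwards [eventually_ge_atTop 1] with m hm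
    have hm0 : (0 : ℝ) < m := by exact_mod_cast hm
    have hmE : (0 : EReal) < (m : EReal) := by exact_mod_cast hm
    rw [EReal.le_div_iff_mul_le hmE (EReal.natCast_ne_top m)]
    -- truncation
    let ε : ℕ → ℝ := fun k => 1 / ((k : ℝ) + 1)
    have hε0 : ∀ k, 0 < ε k := fun k => by positivity
    have hε1 : ∀ k, ε k ≤ 1 := fun k => by
      simp only [ε]
      rw [div_le_one (by positivity)]
      linarith [(Nat.cast_nonneg k : (0 : ℝ) ≤ k)]
    have hεa : Antitone ε := fun k l h => Nat.one_div_le_one_div h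
    have hεl : Tendsto ε atTop (𝓝 0) := tendsto_one_div_add_atTop_nhds_zero_nat
    refine ge_of_tendsto (tendsto_trunc (μ : Measure X) (φ m) (hcont m hm) (fun k => ε k ^ m)
      (fun k l h => pow_le_pow_left₀ (hε0 l).le (hεa h) m) (fun k => pow_pos (hε0 k) m)
      (fun k => pow_le_one₀ (hε0 k).le (hε1 k)) ?_) (Eventually.of_forall fun k => ?_)
    · have := hεl.pow m
      rwa [zero_pow (by omega)] at this
    generalize hδ : ε k = δ
    have hδ0 : 0 < δ := hδ ▸ hε0 k
    let L : ℕ → X → ℝ := fun n x => if n = 0 then 0 else Real.log (max (φ n x) (δ ^ n))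
    have hpos : ∀ n x, 0 < max (φ n x) (δ ^ n) := fun n x => lt_max_of_lt_right (pow_pos hδ0 n)
    have hLpos : ∀ n, 1 ≤ n → ∀ x, L n x = Real.log (max (φ n x) (δ ^ n)) := fun n hn x => by
      simp only [L]
      rw [if_neg (by omega)]
    have hLc : ∀ n, Continuous (L n) := by
      intro n
      rcases Nat.eq_zero_or_pos n with h | h
      · subst h
        simpa [L] using continuous_const
      · have : L n = fun x => Real.log (max (φ n x) (δ ^ n)) := funext (hLpos n h)
        rw [this]
        exact ((hcont n h).max continuous_const).log fun x => (hpos n x).ne'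
    have hLs : ∀ n k x, L (n + k) x ≤ L n x + L k (T^[n] x) := by
      intro n k x
      rcases Nat.eq_zero_or_pos n with h | h
      · subst h
        simp [L]
      rcases Nat.eq_zero_or_pos k with h' | h'
      · subst h'
        simp [L]
      rw [hLpos _ h, hLpos _ h', hLpos _ (by omega), ← Real.log_mul (hpos _ _).ne' (hpos _ _).ne']
      refine Real.log_le_log (hpos _ _) (max_le ?_ ?_)
      · refine (hsub k n h' h x).trans ?_
        exact mul_le_mul (le_max_left _ _) (le_max_left _ _) (hnn _ _ h') (hpos _ _).le
      · rw [pow_add]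
        exact mul_le_mul (le_max_right _ _) (le_max_right _ _) (pow_pos hδ0 k).le (hpos _ _).le
    have hK : ∃ K, ∀ i ≤ m, ∀ x, |L i x| ≤ K := by
      have h1 : ∀ i, ∃ K, ∀ x, |L i x| ≤ K := by
        intro i
        obtain ⟨K, hK⟩ := (isCompact_range (hLc i).abs).bddAbove
        exact ⟨K, fun x => hK ⟨x, rfl⟩⟩
      choose K hK using h1
      refine ⟨∑ i ∈ Finset.range (m + 1), |K i|, fun i hi x => ?_⟩
      refine ((hK i x).trans (le_abs_self _)).trans ?_
      exact Finset.single_le_sum (f := fun i => |K i|) (fun _ _ => abs_nonneg _)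
        (Finset.mem_range.2 (by omega))
    obtain ⟨K, hK⟩ := hK
    have hbirk := subadd_birkhoff T L m K hK hLs
    have hI : ∫ x, Real.log (max (φ m x) (δ ^ m)) ∂(μ : Measure X)
        = ∫ x, L m x ∂(μ : Measure X) := by
      simp_rw [hLpos m hm]
    rw [hI, ← EReal.le_div_iff_mul_le hmE (EReal.natCast_ne_top m)]
    have hβ' := hβ.mono_left Nat.hyperfilter_le_atTop
    have hR : Tendsto (fun n : ℕ => (3 * m * K) / (n : ℝ) / m +
        (∑ i ∈ Finset.range n, L m (T^[i] (y n))) / n / m) (hyperfilter ℕ : Filter ℕ)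
        (𝓝 ((∫ x, L m x ∂(μ : Measure X)) / m)) := by
      have h1 := ((tendsto_const_div_atTop_nhds_zero_nat (3 * m * K)).mono_left
        Nat.hyperfilter_le_atTop).div_const (m : ℝ)
      have h2 := h1.add ((hlim (L m) (hLc m)).div_const (m : ℝ))
      simpa using h2
    have hR' := (continuous_coe_real_ereal.tendsto _).comp hR
    have hcast : (((∫ x, L m x ∂(μ : Measure X)) / m : ℝ) : EReal) =
        ((∫ x, L m x ∂(μ : Measure X) : ℝ) : EReal) / (m : EReal) := by
      rw [EReal.coe_div]
      rfl
    rw [← hcast]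
    refine le_of_tendsto_of_tendsto hβ' hR' ?_
    have h3 : ∀ᶠ n in (hyperfilter ℕ : Filter ℕ), m ≤ n :=
      Nat.hyperfilter_le_atTop (eventually_ge_atTop m)
    filter_upwards [h3] with n hn
    have hn1 : 1 ≤ n := hm.trans hn
    have hn0 : (0 : ℝ) < n := by exact_mod_cast hn1
    have hb := hbirk (n - m) (y n)
    rw [Nat.sub_add_cancel hn] at hb
    have h4 : elog (⨆ x, φ n x) ≤ (L n (y n) : EReal) := by
      rw [← hy n hn1, hLpos n hn1, ← elog_of_pos (hpos _ _)]
      exact elog_mono (le_max_left _ _)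
    have h5 : elog (⨆ x, φ n x) / (n : EReal) ≤ ((L n (y n) / n : ℝ) : EReal) := by
      rw [EReal.coe_div]
      exact EReal.div_le_div_right_of_nonneg (by positivity) h4
    refine h5.trans ?_
    simp only [Function.comp]
    refine EReal.coe_le_coe_iff.2 ?_
    rw [← add_div, ← add_div, div_div, div_le_div_iff₀ hn0 (by positivity)]
    nlinarith
  · refine sSup_le ?_
    rintro _ ⟨μ, hμ, rfl⟩
    refine le_of_tendsto_of_tendsto (hχ μ hμ) hβ ?_
    filter_upwards [eventually_ge_atTop 1] with n hn
    refine EReal.div_le_div_right_of_nonneg (by positivity) ?_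
    exact eint_le_of_le _ _ _ fun x => elog_mono (le_ciSup (hbdd n hn) x)
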